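/- arXiv:1103.1839 — 6 statements merged into one kernel-verified Lean document; each statement's English description precedes it below -/
import Mathlib

section
/- For every nonempty A ⊆ N and every integer j ≥ 1, ∑_{B : N∖A ⊆ B ⊆ N} (-1)^{|A|+|B|+n+1} ( ∑_{∅ ≠ C ⊆ N, C ∩ B = ∅} v_C )^j = − ∑_{(C₁,…,C_j)} ∏_{i=1}^j v_{C_i}, where the sum on the right ranges over all ordered j-tuples (C₁,…,C_j) of nonempty subsets of N with C₁ ∪ ⋯ ∪ C_j = A. -/
open Finset

lemma aux9 {α : Type*} [DecidableEq α] (N A U : Finset α) (hA : A ⊆ N) (hU : U ⊆ N) :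
    (∑ B ∈ N.powerset.filter (fun B => N \ A ⊆ B),
        (-1 : ℝ) ^ (A.card + B.card + N.card + 1) * (if U ∩ B = ∅ then 1 else 0)) =
      - (if U = A then 1 else 0) := by
  by_cases hUA : U ⊆ A
  · have key : (∑ S ∈ (A \ U).powerset, (-1 : ℝ) ^ S.card) = if U = A then 1 else 0 := by
      have h := Finset.sum_powerset_neg_one_pow_card (x := A \ U)
      have h2 : (∑ S ∈ (A \ U).powerset, (-1 : ℝ) ^ S.card)
          = ((∑ S ∈ (A \ U).powerset, (-1 : ℤ) ^ S.card : ℤ) : ℝ) := by push_cast; rfl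
      rw [h2, h]
      have : A \ U = ∅ ↔ U = A := by
        rw [Finset.sdiff_eq_empty_iff_subset]
        exact ⟨fun h => Finset.Subset.antisymm hUA h, fun h => h ▸ Finset.Subset.refl _⟩
      simp only [this]
      split_ifs <;> simp
    rw [← key, ← Finset.sum_neg_distrib]
    simp only [mul_ite, mul_one, mul_zero]
    rw [← Finset.sum_filter]
    symm
    refine Finset.sum_bij' (fun S _ => (N \ A) ∪ S) (fun B _ => B ∩ A) ?_ ?_ ?_ ?_ ?_
    · intro S hS
      simp only [mem_powerset, mem_filter, Finset.subset_iff, Finset.eq_empty_iff_forall_notMem,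
        mem_union, mem_inter, mem_sdiff] at *
      grind
    · intro B hB
      simp only [mem_powerset, mem_filter, Finset.subset_iff, Finset.eq_empty_iff_forall_notMem,
        mem_union, mem_inter, mem_sdiff] at *
      grind
    · intro S hS
      ext x
      simp only [mem_powerset, Finset.subset_iff, mem_union, mem_inter, mem_sdiff] at *
      grind
    · intro B hB
      ext x
      simp only [mem_powerset, mem_filter, Finset.subset_iff, mem_union, mem_inter, mem_sdiff] at *
      grind
    · intro S hS
      have hd : Disjoint (N \ A) S := by
        rw [Finset.disjoint_left]
        intro x hx hxS
        have := mem_powerset.1 hS hxS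
        simp only [mem_sdiff] at *
        tauto
      rw [Finset.card_union_of_disjoint hd]
      have hc := Finset.card_sdiff_add_card_eq_card hA
      have : A.card + ((N \ A).card + S.card) + N.card + 1 = 2 * N.card + S.card + 1 := by omega
      rw [this, pow_succ, pow_add, pow_mul]
      simp
  · have hne : U ≠ A := fun h => hUA (h ▸ Finset.Subset.refl _)
    rw [if_neg hne, neg_zero]
    apply Finset.sum_eq_zero
    intro B hB
    rw [if_neg, mul_zero]
    intro h0
    obtain ⟨x, hx, hxA⟩ := Finset.not_subset.1 hUA
    have : x ∈ U ∩ B :=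
      mem_inter.2 ⟨hx, (mem_filter.1 hB).2 (mem_sdiff.2 ⟨hU hx, hxA⟩)⟩
    simp [h0] at this

theorem stmt9 {α : Type*} [DecidableEq α] (N : Finset α) (v : Finset α → ℝ)
    (A : Finset α) (hA : A ⊆ N) (hAne : A ≠ ∅) (j : ℕ) (hj : 1 ≤ j) :
    (∑ B ∈ N.powerset.filter (fun B => N \ A ⊆ B),
        (-1 : ℝ) ^ (A.card + B.card + N.card + 1) *
          (∑ C ∈ N.powerset.filter (fun C => C ≠ ∅ ∧ C ∩ B = ∅), v C) ^ j) =
      - ∑ f ∈ (Finset.univ :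
            Finset (Fin j → {C : Finset α // C ∈ N.powerset})).filter
          (fun f => (∀ i, (f i : Finset α) ≠ ∅) ∧
            Finset.univ.biUnion (fun i => ((f i : Finset α))) = A),
        ∏ i, v (f i) := by
  have hpow : ∀ B : Finset α,
      (∑ C ∈ N.powerset.filter (fun C => C ≠ ∅ ∧ C ∩ B = ∅), v C) ^ j =
      ∑ f : Fin j → {C : Finset α // C ∈ N.powerset},
        (if ∀ i, (f i : Finset α) ≠ ∅ then ∏ i, v (f i) else 0) *
        (if Finset.univ.biUnion (fun i => ((f i : Finset α))) ∩ B = ∅ then 1 else 0) := by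
    intro B
    rw [Finset.sum_filter, ← Finset.sum_coe_sort, Fintype.sum_pow]
    refine Finset.sum_congr rfl fun f _ => ?_
    have hiff : (Finset.univ.biUnion (fun i => ((f i : Finset α))) ∩ B = ∅) ↔
        ∀ i, (f i : Finset α) ∩ B = ∅ := by
      simp only [Finset.eq_empty_iff_forall_notMem, mem_inter, mem_biUnion, mem_univ, true_and]
      grind
    simp only [hiff]
    by_cases h : ∀ i, (f i : Finset α) ≠ ∅ ∧ (f i : Finset α) ∩ B = ∅
    · rw [if_pos fun i => (h i).1, if_pos fun i => (h i).2, mul_one]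
      exact Finset.prod_congr rfl fun i _ => if_pos (h i)
    · have h1 : ¬ ((∀ i, (f i : Finset α) ≠ ∅) ∧ ∀ i, (f i : Finset α) ∩ B = ∅) :=
        fun h' => h fun i => ⟨h'.1 i, h'.2 i⟩
      obtain ⟨i, hi⟩ := not_forall.1 h
      rw [Finset.prod_eq_zero (mem_univ i) (if_neg hi)]
      by_cases h2 : ∀ i, (f i : Finset α) ≠ ∅
      · rw [if_neg (c := ∀ i, (f i : Finset α) ∩ B = ∅) fun h3 => h1 ⟨h2, h3⟩, mul_zero]
      · rw [if_neg h2, zero_mul]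
  simp only [hpow, Finset.mul_sum]
  rw [Finset.sum_comm, Finset.sum_filter, ← Finset.sum_neg_distrib]
  refine Finset.sum_congr rfl fun f _ => ?_
  have hU : Finset.univ.biUnion (fun i => ((f i : Finset α))) ⊆ N :=
    Finset.biUnion_subset.2 fun i _ => mem_powerset.1 (f i).2
  have h := aux9 N A _ hA hU
  simp only [mul_left_comm _ (if ∀ i, (f i : Finset α) ≠ ∅ then ∏ i, v (f i) else 0) _]
  rw [← Finset.mul_sum, h, ite_and]
  split_ifs <;> simp
end

section
/- Let A be a nonempty finite set and w : (nonempty subsets of A) → ℝ any function. Then for every integer j ≥ 1, ∑_{∅ ≠ B ⊆ A} (-1)^{|B|+1} ( ∑_{∅ ≠ C ⊆ B} w_C )^j = (-1)^{|A|+1} ∑_{(C₁,…,C_j)} ∏_{i=1}^j w_{C_i}, where the sum on the right ranges over all ordered j-tuples (C₁,…,C_j) of nonempty subsets of A with C₁ ∪ ⋯ ∪ C_j = A. -/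
open Finset

theorem key_aux {α : Type*} [DecidableEq α] (A U : Finset α) (hU : U ⊆ A) :
    ∑ B ∈ A.powerset, (if U ⊆ B then (-1 : ℝ) ^ B.card else 0) =
      if U = A then (-1 : ℝ) ^ A.card else 0 := by
  have h := Finset.prod_add (fun _ : α => (-1 : ℝ)) (fun a => if a ∈ U then 0 else 1) A
  have hl : ∏ a ∈ A, ((-1 : ℝ) + (if a ∈ U then 0 else 1)) =
      if U = A then (-1 : ℝ) ^ A.card else 0 := by
    split_ifs with hc
    · subst hc
      rw [← Finset.prod_const]
      apply Finset.prod_congr rfl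
      intro a ha
      simp [ha]
    · have : ∃ a ∈ A, a ∉ U := by
        by_contra! hh
        exact hc (Finset.Subset.antisymm hU hh)
      obtain ⟨a, ha, haU⟩ := this
      exact Finset.prod_eq_zero ha (by simp [haU])
  rw [← hl, h]
  apply Finset.sum_congr rfl
  intro B hB
  rw [Finset.prod_const]
  split_ifs with hc
  · rw [Finset.prod_eq_one, mul_one]
    intro a ha
    rw [Finset.mem_sdiff] at ha
    rw [if_neg (fun h => ha.2 (hc h))]
  · obtain ⟨a, ha, haB⟩ := Finset.not_subset.1 hc
    rw [Finset.prod_eq_zero (i := a), mul_zero]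
    · exact Finset.mem_sdiff.2 ⟨hU ha, haB⟩
    · simp [ha]

theorem stmt10 {α : Type*} [DecidableEq α] (A : Finset α) (hA : A ≠ ∅)
    (w : Finset α → ℝ) (j : ℕ) (hj : 1 ≤ j) :
    (∑ B ∈ A.powerset.filter (fun B => B ≠ ∅),
        (-1 : ℝ) ^ (B.card + 1) *
          (∑ C ∈ B.powerset.filter (fun C => C ≠ ∅), w C) ^ j) =
      (-1 : ℝ) ^ (A.card + 1) *
        ∑ f ∈ (Finset.univ :
            Finset (Fin j → {C : Finset α // C ∈ A.powerset})).filter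
          (fun f => (∀ i, (f i : Finset α) ≠ ∅) ∧
            Finset.univ.biUnion (fun i => ((f i : Finset α))) = A),
        ∏ i, w (f i) := by
  have h1 : ∀ B ∈ A.powerset, (∑ C ∈ B.powerset.filter (fun C => C ≠ ∅), w C) ^ j =
      ∑ f : Fin j → {C : Finset α // C ∈ A.powerset},
        if (∀ i, (f i : Finset α) ≠ ∅ ∧ (f i : Finset α) ⊆ B) then ∏ i, w (f i) else 0 := by
    intro B hB
    have hBA := Finset.mem_powerset.1 hB
    have h2 : ∑ C ∈ B.powerset.filter (fun C => C ≠ ∅), w C =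
        ∑ C : {C : Finset α // C ∈ A.powerset},
          if ((C : Finset α) ≠ ∅ ∧ (C : Finset α) ⊆ B) then w C else 0 := by
      rw [Finset.sum_coe_sort A.powerset (fun C => if (C ≠ ∅ ∧ C ⊆ B) then w C else 0),
        ← Finset.sum_filter]
      apply Finset.sum_congr _ (fun _ _ => rfl)
      ext C
      simp only [Finset.mem_filter, Finset.mem_powerset]
      exact ⟨fun h => ⟨h.1.trans hBA, h.2, h.1⟩, fun h => ⟨h.2.2, h.2.1⟩⟩
    rw [h2, Fintype.sum_pow]
    apply Finset.sum_congr rfl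
    intro f _
    rw [Finset.prod_ite_zero]
    simp
  have h3 : (∑ B ∈ A.powerset.filter (fun B => B ≠ ∅),
        (-1 : ℝ) ^ (B.card + 1) *
          (∑ C ∈ B.powerset.filter (fun C => C ≠ ∅), w C) ^ j) =
      ∑ B ∈ A.powerset, (-1 : ℝ) ^ (B.card + 1) *
          (∑ C ∈ B.powerset.filter (fun C => C ≠ ∅), w C) ^ j := by
    apply Finset.sum_filter_of_ne
    rintro B _ hne rfl
    apply hne
    rw [Finset.sum_eq_zero, zero_pow (by omega), mul_zero]
    intro C hC
    simp at hC
  rw [h3, Finset.sum_congr rfl (fun B hB => by rw [h1 B hB, Finset.mul_sum]), Finset.sum_comm,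
    Finset.mul_sum, Finset.sum_filter]
  apply Finset.sum_congr rfl
  intro f _
  have hU : Finset.univ.biUnion (fun i => ((f i : Finset α))) ⊆ A :=
    Finset.biUnion_subset.2 fun i _ => Finset.mem_powerset.1 (f i).2
  have hk := key_aux A _ hU
  by_cases hne : ∀ i, (f i : Finset α) ≠ ∅
  · trans (-(∏ i, w (f i))) * ∑ B ∈ A.powerset,
      (if Finset.univ.biUnion (fun i => ((f i : Finset α))) ⊆ B then (-1 : ℝ) ^ B.card else 0)
    · rw [Finset.mul_sum]
      apply Finset.sum_congr rfl
      intro B _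
      have : (∀ i, (f i : Finset α) ≠ ∅ ∧ (f i : Finset α) ⊆ B) ↔
          Finset.univ.biUnion (fun i => ((f i : Finset α))) ⊆ B := by
        rw [Finset.biUnion_subset]
        exact ⟨fun h i _ => (h i).2, fun h i => ⟨hne i, h i (Finset.mem_univ i)⟩⟩
      simp only [this]
      split_ifs
      · ring
      · simp
    · rw [hk]
      by_cases hc : Finset.univ.biUnion (fun i => ((f i : Finset α))) = A
      · rw [if_pos hc, if_pos ⟨hne, hc⟩]; ring
      · rw [if_neg hc, if_neg (fun h => hc h.2)]; ring
  · rw [if_neg (fun h => hne h.1)]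
    apply Finset.sum_eq_zero
    intro B _
    rw [if_neg (fun h => hne fun i => (h i).1), mul_zero]
end

section
/- Assume u^N > 0. Then for every nonempty A ⊆ N: ∑_{B : N∖A ⊆ B ⊆ N} (-1)^{|A|+|B|+n+1} ψ(u^B) = ψ'(u^N) · v_A − ∑_{j=2}^∞ (b(j, u^N)/j!) ∑_{(C₁,…,C_j)} ∏_{i=1}^j v_{C_i}, where the inner sum ranges over all ordered j-tuples (C₁,…,C_j) of nonempty subsets of N with C₁ ∪ ⋯ ∪ C_j = A, and the series over j converges absolutely. -/
open MeasureTheory Set Finset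

theorem aux_congr {f g : ℕ → ℝ} {a : ℝ} (h : HasSum f a) (e : ∀ j, g j = f j) : HasSum g a := by
  rw [funext e]; exact h

theorem aux_mob {α : Type*} [DecidableEq α] (A E : Finset α) :
    ∑ D ∈ A.powerset, (-1 : ℝ) ^ (A \ D).card * (if E ⊆ D then 1 else 0) =
      if E = A then 1 else 0 := by
  by_cases hE : E ⊆ A
  · have h := Finset.prod_add (fun _ : α => (1 : ℝ)) (fun i => if i ∈ E then 0 else -1) A
    have h1 : ∏ i ∈ A, ((1 : ℝ) + (if i ∈ E then 0 else -1)) = if E = A then 1 else 0 := by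
      have : ∀ i ∈ A, ((1 : ℝ) + (if i ∈ E then 0 else -1)) = if i ∈ E then 1 else 0 := by
        intro i _; split_ifs <;> norm_num
      rw [Finset.prod_congr rfl this, Finset.prod_ite_zero]
      have : (∀ i ∈ A, i ∈ E) ↔ E = A :=
        ⟨fun h => Finset.Subset.antisymm hE h, fun h => by subst h; simp⟩
      simp [this]
    rw [← h1, h]
    refine Finset.sum_congr rfl fun D hD => ?_
    have : ∀ i ∈ A \ D, (if i ∈ E then (0 : ℝ) else -1) = if i ∉ E then -1 else 0 := by
      intro i _; split_ifs <;> simp_all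
    rw [Finset.prod_congr rfl this, Finset.prod_ite_zero]
    have : (∀ i ∈ A \ D, i ∉ E) ↔ E ⊆ D := by
      constructor
      · intro h i hi
        by_contra hD
        exact h i (by simp [hD, hE hi]) hi
      · intro h i hi hiE
        simp at hi
        exact hi.2 (h hiE)
    by_cases hs : E ⊆ D
    · rw [if_pos hs, if_pos (this.2 hs)]; simp
    · rw [if_neg hs, if_neg (fun h => hs (this.1 h))]; simp
  · rw [if_neg (by rintro rfl; exact hE (Finset.Subset.refl _))]
    refine Finset.sum_eq_zero fun D hD => ?_
    rw [if_neg]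
    · simp
    · intro h; exact hE (h.trans (Finset.mem_powerset.1 hD))

theorem aux_bd1 {x : ℝ} (hx : 0 ≤ x) : 0 ≤ Real.exp (-x) - 1 + x ∧
    Real.exp (-x) - 1 + x ≤ x ∧ Real.exp (-x) - 1 + x ≤ x ^ 2 := by
  have h1 := Real.add_one_le_exp (-x)
  have h2 : Real.exp (-x) ≤ 1 := by simpa using hx
  refine ⟨by linarith, by linarith, ?_⟩
  have h3 : Real.exp (-x) * (1 + x) ≤ 1 := by
    have := Real.add_one_le_exp x
    calc Real.exp (-x) * (1 + x) ≤ Real.exp (-x) * Real.exp x := by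
          gcongr; linarith
      _ = 1 := by rw [← Real.exp_add]; simp
  have h4 : (Real.exp (-x) - 1 + x - x ^ 2) * (1 + x) ≤ 0 := by
    nlinarith [pow_nonneg hx 3]
  by_contra h
  push Not at h
  nlinarith [mul_pos (sub_pos.2 h) (by linarith : 0 < 1 + x)]

theorem aux_int (π : Measure ℝ)
    (hπ : (∫⁻ r in Set.Ioi (0 : ℝ), ENNReal.ofReal (min r (r ^ 2)) ∂π) < ⊤)
    (g : ℝ → ℝ) (hg : Continuous g) (c : ℝ)
    (h0 : ∀ r, 0 < r → 0 ≤ g r) (h1 : ∀ r, 0 < r → g r ≤ c * r)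
    (h2 : ∀ r, 0 < r → g r ≤ c * r ^ 2) :
    Integrable g (π.restrict (Set.Ioi 0)) := by
  have hm : Integrable (fun r : ℝ => min r (r ^ 2)) (π.restrict (Set.Ioi 0)) := by
    refine ⟨by fun_prop, ?_⟩
    rw [hasFiniteIntegral_iff_ofReal]
    · exact hπ
    · filter_upwards [ae_restrict_mem measurableSet_Ioi] with r hr
      have : (0 : ℝ) < r := hr
      simp only [Pi.zero_apply]
      positivity
  refine (hm.const_mul c).mono' hg.aestronglyMeasurable ?_
  filter_upwards [ae_restrict_mem measurableSet_Ioi] with r hr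
  rw [Real.norm_of_nonneg (h0 r hr)]
  rcases min_choice r (r ^ 2) with h | h <;> rw [h]
  · exact h1 r hr
  · exact h2 r hr

theorem aux_exp (x : ℝ) : HasSum (fun j : ℕ => x ^ (j + 2) / (Nat.factorial (j + 2) : ℝ))
    (Real.exp x - 1 - x) := by
  have h : HasSum (fun j : ℕ => x ^ j / (Nat.factorial j : ℝ)) (Real.exp x) := by
    rw [Real.exp_eq_exp_ℝ]
    exact NormedSpace.expSeries_div_hasSum_exp x
  rw [← hasSum_nat_add_iff' 2] at h
  simpa [Finset.sum_range_succ, sub_sub] using h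

theorem aux_main (π : Measure ℝ)
    (hπ : (∫⁻ r in Set.Ioi (0 : ℝ), ENNReal.ofReal (min r (r ^ 2)) ∂π) < ⊤)
    (U w : ℝ) (hU : 0 < U) (hw : 0 ≤ w) (hwU : w ≤ U) :
    HasSum (fun j : ℕ => (∫ r in Set.Ioi (0 : ℝ), r ^ (j + 2) * Real.exp (-U * r) ∂π) /
        (Nat.factorial (j + 2) : ℝ) * w ^ (j + 2))
      ((∫ r in Set.Ioi (0 : ℝ), (Real.exp (-(U - w) * r) - 1 + (U - w) * r) ∂π)
        - (∫ r in Set.Ioi (0 : ℝ), (Real.exp (-U * r) - 1 + U * r) ∂π)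
        + (∫ r in Set.Ioi (0 : ℝ), r * (1 - Real.exp (-U * r)) ∂π) * w) := by
  have I1 : ∀ l : ℝ, 0 ≤ l → Integrable (fun r : ℝ => Real.exp (-l * r) - 1 + l * r)
      (π.restrict (Set.Ioi 0)) := by
    intro l hl
    refine aux_int π hπ _ (by fun_prop) (l + l ^ 2) ?_ ?_ ?_ <;> intro r hr <;>
      obtain ⟨k0, k1, k2⟩ := aux_bd1 (mul_nonneg hl hr.le) <;> rw [neg_mul]
    · exact k0
    · nlinarith [mul_nonneg (sq_nonneg l) hr.le]
    · nlinarith [mul_nonneg hl (sq_nonneg r)]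
  have I2 : Integrable (fun r : ℝ => r * (1 - Real.exp (-U * r)))
      (π.restrict (Set.Ioi 0)) := by
    refine aux_int π hπ _ (by fun_prop) (1 + U) ?_ ?_ ?_ <;> intro r hr <;>
      have k := Real.add_one_le_exp (-U * r) <;>
      have k' : Real.exp (-U * r) ≤ 1 := by
        simp only [neg_mul, Real.exp_le_one_iff]; nlinarith
    · exact mul_nonneg hr.le (by linarith)
    · nlinarith [Real.exp_pos (-U * r), mul_pos hU hr, mul_pos hr (Real.exp_pos (-U * r))]
    · nlinarith [mul_le_mul_of_nonneg_left k hr.le, sq_nonneg r]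
  have key : ∀ r : ℝ, Real.exp (-U * r) * (Real.exp (w * r) - 1 - w * r) =
      (Real.exp (-(U - w) * r) - 1 + (U - w) * r) - (Real.exp (-U * r) - 1 + U * r)
        + r * (1 - Real.exp (-U * r)) * w := by
    intro r
    have : Real.exp (-(U - w) * r) = Real.exp (-U * r) * Real.exp (w * r) := by
      rw [← Real.exp_add]; congr 1; ring
    rw [this]; ring
  have I3 : Integrable (fun r : ℝ => Real.exp (-U * r) * (Real.exp (w * r) - 1 - w * r))
      (π.restrict (Set.Ioi 0)) := by
    simp_rw [key]
    exact ((I1 _ (by linarith)).sub (I1 U hU.le)).add (I2.mul_const w)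
  have S : ∀ r : ℝ, HasSum (fun j : ℕ => r ^ (j + 2) * Real.exp (-U * r) /
        (Nat.factorial (j + 2) : ℝ) * w ^ (j + 2))
        (Real.exp (-U * r) * (Real.exp (w * r) - 1 - w * r)) := by
    intro r
    have := (aux_exp (w * r)).mul_left (Real.exp (-U * r))
    refine aux_congr this fun j => ?_
    rw [mul_pow]; ring
  have H := hasSum_integral_of_dominated_convergence (μ := π.restrict (Set.Ioi 0))
    (F := fun (j : ℕ) (r : ℝ) => r ^ (j + 2) * Real.exp (-U * r) /
        (Nat.factorial (j + 2) : ℝ) * w ^ (j + 2))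
    (f := fun r => Real.exp (-U * r) * (Real.exp (w * r) - 1 - w * r))
    (fun (j : ℕ) (r : ℝ) => r ^ (j + 2) * Real.exp (-U * r) /
        (Nat.factorial (j + 2) : ℝ) * w ^ (j + 2))
    (fun j => Continuous.aestronglyMeasurable (by fun_prop))
    (fun j => by
      filter_upwards [ae_restrict_mem measurableSet_Ioi] with r hr
      have : (0 : ℝ) < r := hr
      rw [Real.norm_of_nonneg (by positivity)])
    (Filter.Eventually.of_forall fun r => (S r).summable)
    (by
      simp_rw [fun r => (S r).tsum_eq]
      exact I3)
    (Filter.Eventually.of_forall S)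
  have e : ∫ r in Set.Ioi (0 : ℝ), Real.exp (-U * r) * (Real.exp (w * r) - 1 - w * r) ∂π =
      ((∫ r in Set.Ioi (0 : ℝ), (Real.exp (-(U - w) * r) - 1 + (U - w) * r) ∂π)
        - (∫ r in Set.Ioi (0 : ℝ), (Real.exp (-U * r) - 1 + U * r) ∂π)
        + (∫ r in Set.Ioi (0 : ℝ), r * (1 - Real.exp (-U * r)) ∂π) * w) := by
    simp_rw [key]
    have J := I1 (U - w) (by linarith)
    have e1 := integral_sub J (I1 U hU.le)
    have e2 := integral_add (J.sub (I1 U hU.le)) (I2.mul_const w)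
    simp only [Pi.sub_apply] at e2
    rw [e2, e1, integral_mul_const]
  rw [e] at H
  refine aux_congr H fun j => ?_
  rw [integral_mul_const, integral_div]

theorem stmt11 {α : Type*} [DecidableEq α]
    (a₁ a₂ : ℝ) (ha₁ : 0 ≤ a₁) (ha₂ : 0 ≤ a₂)
    (π : Measure ℝ)
    (hπ : (∫⁻ r in Set.Ioi (0 : ℝ), ENNReal.ofReal (min r (r ^ 2)) ∂π) < ⊤)
    (ψ dψ : ℝ → ℝ) (b : ℕ → ℝ → ℝ)
    (hψ : ∀ l : ℝ, 0 ≤ l → ψ l = a₁ * l + a₂ * l ^ 2 +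
        ∫ r in Set.Ioi (0 : ℝ), (Real.exp (-l * r) - 1 + l * r) ∂π)
    (hdψ : ∀ l : ℝ, 0 < l → dψ l = a₁ + 2 * a₂ * l +
        ∫ r in Set.Ioi (0 : ℝ), r * (1 - Real.exp (-l * r)) ∂π)
    (hb : ∀ j : ℕ, 2 ≤ j → ∀ l : ℝ, 0 < l → b j l =
        2 * a₂ * (if j = 2 then 1 else 0) +
          ∫ r in Set.Ioi (0 : ℝ), r ^ j * Real.exp (-l * r) ∂π)
    (N : Finset α) (v : Finset α → ℝ)
    (hv : ∀ C : Finset α, C ⊆ N → C ≠ ∅ → 0 ≤ v C)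
    (u : Finset α → ℝ)
    (hu : ∀ B : Finset α, u B =
        ∑ C ∈ N.powerset.filter (fun C => C ≠ ∅ ∧ (C ∩ B).Nonempty), v C)
    (huN : 0 < u N)
    (A : Finset α) (hA : A ⊆ N) (hAne : A ≠ ∅)
    (T : ℕ → ℝ)
    (hT : ∀ j : ℕ, T j =
        ∑ f ∈ (Finset.univ :
            Finset (Fin j → {C : Finset α // C ∈ N.powerset})).filter
          (fun f => (∀ i, (f i : Finset α) ≠ ∅) ∧
            Finset.univ.biUnion (fun i => ((f i : Finset α))) = A),
        ∏ i, v (f i)) :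
    Summable (fun j : ℕ =>
      |b (j + 2) (u N) / (Nat.factorial (j + 2) : ℝ) * T (j + 2)|) ∧
    (∑ B ∈ N.powerset.filter (fun B => N \ A ⊆ B),
        (-1 : ℝ) ^ (A.card + B.card + N.card + 1) * ψ (u B)) =
      dψ (u N) * v A -
        ∑' j : ℕ, b (j + 2) (u N) / (Nat.factorial (j + 2) : ℝ) * T (j + 2) := by
  classical
  set U := u N with hUdef
  let W : Finset α → ℝ := fun D =>
    ∑ C : {C : Finset α // C ∈ N.powerset}, if (C : Finset α) ≠ ∅ ∧ (C : Finset α) ⊆ D then v C else 0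
  have hW' : ∀ D, W D = ∑ C ∈ N.powerset, if C ≠ ∅ ∧ C ⊆ D then v C else 0 := fun D =>
    Finset.sum_coe_sort N.powerset (fun C => if C ≠ ∅ ∧ C ⊆ D then v C else 0)
  have hW0 : ∀ D, 0 ≤ W D := by
    intro D
    rw [hW']
    refine Finset.sum_nonneg fun C hC => ?_
    split_ifs with h
    · exact hv C (Finset.mem_powerset.1 hC) h.1
    · exact le_rfl
  have hu0 : ∀ B, 0 ≤ u B := by
    intro B
    rw [hu]
    refine Finset.sum_nonneg fun C hC => ?_
    simp only [Finset.mem_filter, Finset.mem_powerset] at hC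
    exact hv C hC.1 hC.2.1
  have hUW : ∀ D, D ⊆ N → u (N \ D) = U - W D := by
    intro D hD
    rw [eq_sub_iff_add_eq, hUdef, hu, hu, hW', Finset.sum_filter, Finset.sum_filter,
      ← Finset.sum_add_distrib]
    refine Finset.sum_congr rfl fun C hC => ?_
    have hC := Finset.mem_powerset.1 hC
    by_cases h0 : C = ∅
    · simp [h0]
    have e1 : (C ∩ N).Nonempty := by
      rw [Finset.inter_eq_left.2 hC]; exact Finset.nonempty_iff_ne_empty.2 h0
    have e2 : (C ∩ (N \ D)).Nonempty ↔ ¬ C ⊆ D := by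
      rw [Finset.not_subset]
      constructor
      · rintro ⟨x, hx⟩
        simp at hx
        exact ⟨x, hx.1, hx.2.2⟩
      · rintro ⟨x, hx, hx'⟩
        exact ⟨x, by simp [hx, hx', hC hx]⟩
    by_cases hs : C ⊆ D <;> simp [h0, e1, e2, hs]
  have M0 : ∑ D ∈ A.powerset, (-1 : ℝ) ^ (A \ D).card = 0 := by
    have := aux_mob A ∅
    rw [if_neg (Ne.symm hAne)] at this
    simpa using this
  have M1 : ∑ D ∈ A.powerset, (-1 : ℝ) ^ (A \ D).card * W D = v A := by
    simp_rw [hW', Finset.mul_sum]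
    rw [Finset.sum_comm]
    have : ∀ C ∈ N.powerset, ∑ D ∈ A.powerset, (-1 : ℝ) ^ (A \ D).card *
        (if C ≠ ∅ ∧ C ⊆ D then v C else 0) = if C = A then v A else 0 := by
      intro C _
      by_cases h0 : C = ∅
      · subst h0
        simp [Ne.symm hAne]
      · have := congrArg (· * v C) (aux_mob A C)
        simp only [Finset.sum_mul] at this
        trans (if C = A then 1 else 0) * v C
        · rw [← this]
          refine Finset.sum_congr rfl fun D _ => ?_
          by_cases hs : C ⊆ D <;> simp [h0, hs]
        · by_cases hs : C = A <;> simp [hs]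
    rw [Finset.sum_congr rfl this]
    simp [hA]
  have MT : ∀ j, ∑ D ∈ A.powerset, (-1 : ℝ) ^ (A \ D).card * W D ^ j = T j := by
    intro j
    rw [hT, Finset.sum_filter]
    have hp : ∀ D, W D ^ j = ∑ f : Fin j → {C : Finset α // C ∈ N.powerset},
        (if ∀ i, (f i : Finset α) ≠ ∅ then ∏ i, v (f i) else 0) *
          (if Finset.univ.biUnion (fun i => (f i : Finset α)) ⊆ D then 1 else 0) := by
      intro D
      rw [Fintype.sum_pow]
      refine Finset.sum_congr rfl fun f _ => ?_
      rw [Finset.prod_ite_zero]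
      have e : (∀ i ∈ (Finset.univ : Finset (Fin j)), (f i : Finset α) ≠ ∅ ∧ (f i : Finset α) ⊆ D) ↔
          (∀ i, (f i : Finset α) ≠ ∅) ∧ Finset.univ.biUnion (fun i => (f i : Finset α)) ⊆ D := by
        rw [Finset.biUnion_subset]
        simp [forall_and]
      by_cases h1 : ∀ i, (f i : Finset α) ≠ ∅
      · by_cases h2 : Finset.univ.biUnion (fun i => (f i : Finset α)) ⊆ D
        · rw [if_pos (e.2 ⟨h1, h2⟩), if_pos h1, if_pos h2, mul_one]
        · rw [if_neg (fun h => h2 (e.1 h).2), if_neg h2, mul_zero]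
      · rw [if_neg (fun h => h1 (e.1 h).1), if_neg h1, zero_mul]
    simp_rw [hp, Finset.mul_sum]
    rw [Finset.sum_comm]
    refine Finset.sum_congr rfl fun f _ => ?_
    have := congrArg ((if ∀ i, (f i : Finset α) ≠ ∅ then ∏ i, v (f i) else 0) * ·)
      (aux_mob A (Finset.univ.biUnion (fun i => (f i : Finset α))))
    simp only [Finset.mul_sum] at this
    rw [ite_and]
    trans (if ∀ i, (f i : Finset α) ≠ ∅ then ∏ i, v (f i) else 0) *
      (if Finset.univ.biUnion (fun i => (f i : Finset α)) = A then 1 else 0)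
    · rw [← this]
      refine Finset.sum_congr rfl fun D _ => ?_
      ring
    · split_ifs <;> simp
  have HS : ∀ D ∈ A.powerset, HasSum (fun j : ℕ => b (j + 2) U / (Nat.factorial (j + 2) : ℝ) *
      W D ^ (j + 2)) (ψ (u (N \ D)) - ψ U + dψ U * W D) := by
    intro D hD
    have hDN := (Finset.mem_powerset.1 hD).trans hA
    have h0 := hu0 (N \ D)
    rw [hUW D hDN] at h0 ⊢
    have h := aux_main π hπ U (W D) huN (hW0 D) (by linarith)
    have h2 := (hasSum_ite_eq (0 : ℕ) (a₂ * W D ^ 2)).add h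
    convert h2 using 1
    · funext j
      rw [hb _ (by omega) _ huN]
      rcases j with _ | j
      · simp; ring
      · simp
    · rw [hψ _ h0, hψ _ huN.le, hdψ _ huN]
      ring
  have HT : HasSum (fun j : ℕ => b (j + 2) U / (Nat.factorial (j + 2) : ℝ) * T (j + 2))
      (∑ D ∈ A.powerset, (-1 : ℝ) ^ (A \ D).card * (ψ (u (N \ D)) - ψ U + dψ U * W D)) := by
    have := hasSum_sum (fun D hD => (HS D hD).mul_left ((-1 : ℝ) ^ (A \ D).card))
    refine aux_congr this fun j => ?_
    rw [← MT, Finset.mul_sum]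
    refine Finset.sum_congr rfl fun D _ => ?_
    ring
  refine ⟨HT.summable.abs, ?_⟩
  rw [HT.tsum_eq]
  have L : (∑ B ∈ N.powerset.filter (fun B => N \ A ⊆ B),
        (-1 : ℝ) ^ (A.card + B.card + N.card + 1) * ψ (u B)) =
      ∑ D ∈ A.powerset, -((-1 : ℝ) ^ (A \ D).card * ψ (u (N \ D))) := by
    refine Finset.sum_nbij' (fun B => N \ B) (fun D => N \ D) ?_ ?_ ?_ ?_ ?_
    · intro B hB
      simp only [Finset.mem_filter, Finset.mem_powerset] at hB ⊢
      intro x hx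
      simp at hx
      by_contra hxA
      exact hx.2 (hB.2 (by simp [hx.1, hxA]))
    · intro D hD
      simp only [Finset.mem_filter, Finset.mem_powerset] at hD ⊢
      exact ⟨Finset.sdiff_subset, Finset.sdiff_subset_sdiff (Finset.Subset.refl _) hD⟩
    · intro B hB
      simp only [Finset.mem_filter, Finset.mem_powerset] at hB
      exact Finset.sdiff_sdiff_eq_self hB.1
    · intro D hD
      exact Finset.sdiff_sdiff_eq_self ((Finset.mem_powerset.1 hD).trans hA)
    · intro B hB
      simp only [Finset.mem_filter, Finset.mem_powerset] at hB
      have hs : N \ B ⊆ A := by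
        intro x hx
        simp at hx
        by_contra hxA
        exact hx.2 (hB.2 (by simp [hx.1, hxA]))
      rw [Finset.sdiff_sdiff_eq_self hB.1]
      have c1 := Finset.card_sdiff_add_card_eq_card hs
      have c2 := Finset.card_sdiff_add_card_eq_card hB.1
      have : A.card + B.card + N.card + 1 =
          (A \ (N \ B)).card + 2 * N.card + 1 := by omega
      rw [this, pow_succ, pow_add, pow_mul]
      simp
  rw [L]
  simp_rw [mul_add, mul_sub, Finset.sum_add_distrib, Finset.sum_sub_distrib]
  rw [← Finset.sum_mul, M0, Finset.sum_neg_distrib]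
  have : ∑ D ∈ A.powerset, (-1 : ℝ) ^ (A \ D).card * (dψ U * W D) = dψ U * v A := by
    rw [← M1, Finset.mul_sum]
    refine Finset.sum_congr rfl fun D _ => ?_
    ring
  rw [this]
  ring
end

section
/- Let N be a nonempty finite set, let a_C ≥ 0 be given for each nonempty C ⊆ N, and set b_A = ∑_{∅ ≠ C ⊆ N, C ∩ A ≠ ∅} a_C for each A ⊆ N (so b_∅ = 0). Then e^{-b_N} ∑_{m=1}^∞ (1/m!) ∑_{(C₁,…,C_m)} ∏_{i=1}^m a_{C_i} = ∑_{A ⊆ N} (-1)^{|A|} e^{-b_A}, where the inner sum ranges over all ordered m-tuples (C₁,…,C_m) of nonempty subsets of N with C₁ ∪ ⋯ ∪ C_m = N, and the series over m converges absolutely. -/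
open Finset

theorem stmt13 {α : Type*} [DecidableEq α] (N : Finset α) (hN : N ≠ ∅)
    (a : Finset α → ℝ) (ha : ∀ C : Finset α, C ⊆ N → C ≠ ∅ → 0 ≤ a C)
    (b : Finset α → ℝ)
    (hb : ∀ A : Finset α, b A =
        ∑ C ∈ N.powerset.filter (fun C => C ≠ ∅ ∧ (C ∩ A).Nonempty), a C)
    (S : ℕ → ℝ)
    (hS : ∀ m : ℕ, S m =
        ∑ f ∈ (Finset.univ :
            Finset (Fin m → {C : Finset α // C ∈ N.powerset})).filter
          (fun f => (∀ i, (f i : Finset α) ≠ ∅) ∧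
            Finset.univ.biUnion (fun i => ((f i : Finset α))) = N),
        ∏ i, a (f i)) :
    Summable (fun m : ℕ => |(1 / (Nat.factorial (m + 1) : ℝ)) * S (m + 1)|) ∧
    Real.exp (-(b N)) * ∑' m : ℕ, (1 / (Nat.factorial (m + 1) : ℝ)) * S (m + 1) =
      ∑ A ∈ N.powerset, (-1 : ℝ) ^ A.card * Real.exp (-(b A)) := by
  have key : ∀ m : ℕ, S m = ∑ A ∈ N.powerset, (-1 : ℝ) ^ A.card * (b N - b A) ^ m := by
    intro m
    have hc : ∀ A ∈ N.powerset, b N - b A =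
        ∑ C : {C : Finset α // C ∈ N.powerset},
          if ((C : Finset α) ≠ ∅ ∧ Disjoint (C : Finset α) A) then a C else 0 := by
      intro A hA
      rw [hb, hb, Finset.sum_filter, Finset.sum_filter, ← Finset.sum_sub_distrib,
        ← Finset.sum_coe_sort N.powerset]
      refine Finset.sum_congr rfl fun C _ => ?_
      have hCN : (C : Finset α) ∩ N = C := Finset.inter_eq_left.2 (Finset.mem_powerset.1 C.2)
      simp only [hCN, Finset.disjoint_iff_inter_eq_empty, ← Finset.not_nonempty_iff_eq_empty (s := _ ∩ _)]
      by_cases h1 : (C : Finset α) = ∅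
      · simp [h1]
      · have h2 := Finset.nonempty_iff_ne_empty.2 h1
        by_cases h3 : ((C : Finset α) ∩ A).Nonempty <;> simp [h1, h2, h3]
    rw [hS, Finset.sum_filter]
    have h1 : ∀ A ∈ N.powerset, (-1 : ℝ) ^ A.card * (b N - b A) ^ m =
        ∑ f : Fin m → {C : Finset α // C ∈ N.powerset}, (-1 : ℝ) ^ A.card *
          ∏ i, if ((f i : Finset α) ≠ ∅ ∧ Disjoint (f i : Finset α) A) then a (f i) else 0 := by
      intro A hA
      rw [hc A hA, Fintype.sum_pow, Finset.mul_sum]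
    rw [Finset.sum_congr rfl h1, Finset.sum_comm]
    refine Finset.sum_congr rfl fun f _ => ?_
    simp only [Finset.prod_ite_zero, Finset.mem_univ, true_implies, forall_and]
    by_cases hne : ∀ i, (f i : Finset α) ≠ ∅
    · simp only [mul_ite, mul_zero]
      set U := Finset.univ.biUnion (fun i => ((f i : Finset α))) with hU
      have hUN : U ⊆ N := by
        rw [hU, Finset.biUnion_subset]
        exact fun i _ => Finset.mem_powerset.1 (f i).2
      have hd : N.powerset.filter (fun A => (∀ i, (f i : Finset α) ≠ ∅) ∧ ∀ i, Disjoint (f i : Finset α) A)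
          = (N \ U).powerset := by
        ext A
        simp only [Finset.mem_filter, Finset.mem_powerset, Finset.subset_sdiff, hU,
          Finset.disjoint_biUnion_right, Finset.mem_univ, true_implies]
        simp only [disjoint_comm (a := A)]
        exact ⟨fun h => ⟨h.1, h.2.2⟩, fun h => ⟨h.1, hne, h.2⟩⟩
      rw [← Finset.sum_filter, hd, ← Finset.sum_mul]
      have h2 : (∑ A ∈ (N \ U).powerset, (-1 : ℝ) ^ A.card) = if N \ U = ∅ then 1 else 0 := by
        exact_mod_cast congrArg (Int.cast : ℤ → ℝ) (Finset.sum_powerset_neg_one_pow_card (x := N \ U))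
      rw [h2]
      have h3 : U = N ↔ N \ U = ∅ := by
        rw [Finset.sdiff_eq_empty_iff_subset]
        exact ⟨fun h => h ▸ subset_rfl, fun h => hUN.antisymm h⟩
      by_cases h4 : U = N
      · rw [if_pos ⟨hne, h4⟩, if_pos (h3.1 h4), one_mul]
      · rw [if_neg (fun h => h4 h.2), if_neg (fun h => h4 (h3.2 h)), zero_mul]
    · simp [hne]
  have hsum : HasSum (fun m : ℕ => (1 / (Nat.factorial m : ℝ)) * S m)
      (∑ A ∈ N.powerset, (-1 : ℝ) ^ A.card * Real.exp (b N - b A)) := by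
    have h : ∀ A ∈ N.powerset, HasSum
        (fun m : ℕ => (-1 : ℝ) ^ A.card * ((b N - b A) ^ m / (Nat.factorial m : ℝ)))
        ((-1 : ℝ) ^ A.card * Real.exp (b N - b A)) := by
      intro A _
      rw [Real.exp_eq_exp_ℝ]
      exact (NormedSpace.expSeries_div_hasSum_exp (b N - b A)).mul_left _
    refine (hasSum_sum h).congr_fun ?_
    intro m
    rw [key, Finset.mul_sum]
    refine Finset.sum_congr rfl fun A _ => ?_
    ring
  have hS0 : S 0 = 0 := by
    rw [hS]
    apply Finset.sum_eq_zero
    intro f hf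
    simp only [Finset.mem_filter] at hf
    exact absurd (by simpa using hf.2.2.symm) hN
  have hsum' := (hasSum_nat_add_iff' 1).2 hsum
  simp only [Finset.sum_range_one, hS0, mul_zero, sub_zero] at hsum'
  refine ⟨hsum'.summable.abs, ?_⟩
  rw [hsum'.tsum_eq, Finset.mul_sum]
  refine Finset.sum_congr rfl fun A _ => ?_
  rw [mul_left_comm, ← Real.exp_add]
  congr 2
  ring
end

section
/- Let λ₀ > 0, let m_j ≥ 0 for integers j ≥ 2 be such that ψ̃(u) = ∑_{j=2}^∞ m_j u^j / j! converges for every u with 0 ≤ u < λ₀, and let K > 0. Let (c_n)_{n≥1} be nonnegative reals with c₁ ≤ 1 satisfying, for every n ≥ 2, c_n ≤ K ∑_{j=2}^n (m_j/j!) ∑_{(i₁,…,i_j)} (n!/(i₁!⋯i_j!)) ∏_{k=1}^j c_{i_k}, where the inner sum ranges over all ordered j-tuples of positive integers with i₁ + ⋯ + i_j = n. Then there exists λ > 0 such that ∑_{n=1}^∞ c_n λ^n / n! < ∞. -/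
open Finset

lemma aux_le (b : ℕ → ℝ) (hb : ∀ n, 1 ≤ n → 0 ≤ b n) (N j : ℕ) (hj : 2 ≤ j) :
    ∑ n ∈ Finset.Icc 2 (N+1),
      ∑ i ∈ (Finset.Nat.antidiagonalTuple j n).filter (fun i => ∀ k, 1 ≤ i k), ∏ k, b (i k)
    ≤ (∑ l ∈ Finset.Icc 1 N, b l) ^ j := by
  have h1 : (∑ l ∈ Finset.Icc 1 N, b l) ^ j
      = ∑ p ∈ Fintype.piFinset (fun _ : Fin j => Finset.Icc 1 N), ∏ k, b (p k) := by
    rw [← Finset.prod_univ_sum]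
    simp
  rw [h1, ← Finset.sum_biUnion]
  · apply Finset.sum_le_sum_of_subset_of_nonneg
    · intro p hp
      simp only [Finset.mem_biUnion, Finset.mem_filter, Finset.Nat.mem_antidiagonalTuple,
        Finset.mem_Icc] at hp
      obtain ⟨n, hn, hs, hp⟩ := hp
      simp only [Fintype.mem_piFinset, Finset.mem_Icc]
      intro k
      refine ⟨hp k, ?_⟩
      have h2 : p k + ∑ x ∈ Finset.univ.erase k, p x = n := by
        rw [← hs]; exact Finset.add_sum_erase _ _ (Finset.mem_univ k)
      have h3 : ∑ x ∈ Finset.univ.erase k, 1 ≤ ∑ x ∈ Finset.univ.erase k, p x :=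
        Finset.sum_le_sum (fun x _ => hp x)
      simp at h3
      omega
    · intro p hp _
      simp only [Fintype.mem_piFinset, Finset.mem_Icc] at hp
      exact Finset.prod_nonneg (fun k _ => hb _ (hp k).1)
  · intro x _ y _ hxy
    simp only [Function.onFun]
    rw [Finset.disjoint_left]
    intro p hp hq
    simp only [Finset.mem_filter, Finset.Nat.mem_antidiagonalTuple] at hp hq
    exact hxy (hp.1.symm.trans hq.1)

theorem stmt14 (lam₀ : ℝ) (hlam₀ : 0 < lam₀)
    (m : ℕ → ℝ) (hm : ∀ j : ℕ, 2 ≤ j → 0 ≤ m j)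
    (hconv : ∀ u : ℝ, 0 ≤ u → u < lam₀ →
      Summable (fun j : ℕ => m (j + 2) * u ^ (j + 2) / (Nat.factorial (j + 2) : ℝ)))
    (K : ℝ) (hK : 0 < K)
    (c : ℕ → ℝ) (hcpos : ∀ n : ℕ, 1 ≤ n → 0 ≤ c n) (hc1 : c 1 ≤ 1)
    (hrec : ∀ n : ℕ, 2 ≤ n →
      c n ≤ K * ∑ j ∈ Finset.Icc 2 n, (m j / (Nat.factorial j : ℝ)) *
        ∑ i ∈ (Finset.Nat.antidiagonalTuple j n).filter (fun i => ∀ k, 1 ≤ i k),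
          ((Nat.factorial n : ℝ) / ∏ k, (Nat.factorial (i k) : ℝ)) * ∏ k, c (i k)) :
    ∃ lam : ℝ, 0 < lam ∧
      Summable (fun n : ℕ => c (n + 1) * lam ^ (n + 1) / (Nat.factorial (n + 1) : ℝ)) := by
  have hu0 : 0 < lam₀ / 2 := by positivity
  set v := lam₀ / 2 with hv
  have hS := hconv v hu0.le (by linarith)
  have hnn : ∀ j : ℕ, 0 ≤ m (j + 2) * v ^ (j + 2) / (Nat.factorial (j + 2) : ℝ) := fun j => by
    have := hm (j+2) (by omega)
    positivity
  obtain ⟨M, hM⟩ : ∃ M, M = ∑' j : ℕ, m (j + 2) * v ^ (j + 2) / (Nat.factorial (j + 2) : ℝ) :=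
    ⟨_, rfl⟩
  have hM0 : 0 ≤ M := hM ▸ tsum_nonneg hnn
  have hMN : ∀ N : ℕ, ∑ j ∈ Finset.Icc 2 N, m j / (Nat.factorial j : ℝ) * v ^ j ≤ M := by
    intro N
    have h1 : ∑ j ∈ Finset.range N, m (j + 2) * v ^ (j + 2) / (Nat.factorial (j + 2) : ℝ) ≤ M :=
      hM ▸ hS.sum_le_tsum _ (fun j _ => hnn j)
    refine le_trans ?_ h1
    have h2 : ∑ j ∈ Finset.range N, m (j + 2) * v ^ (j + 2) / (Nat.factorial (j + 2) : ℝ)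
        = ∑ j ∈ Finset.Ico 2 (N+2), m j / (Nat.factorial j : ℝ) * v ^ j := by
      rw [Finset.sum_Ico_eq_sum_range]
      simp only [Nat.add_sub_cancel]
      refine Finset.sum_congr rfl fun j _ => ?_
      rw [add_comm 2 j]; ring
    rw [h2]
    apply Finset.sum_le_sum_of_subset_of_nonneg
    · intro x; simp only [Finset.mem_Icc, Finset.mem_Ico]; omega
    · intro x hx _
      have := hm x (Finset.mem_Ico.1 hx).1
      positivity
  -- scale t in (0,1], u = t v
  obtain ⟨t, ht0, ht1, ht⟩ : ∃ t : ℝ, 0 < t ∧ t ≤ 1 ∧ K * M * t ≤ v / 2 := by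
    refine ⟨min 1 (v / 2 / (K * M + 1)), by positivity, min_le_left _ _, ?_⟩
    have h1 : min 1 (v / 2 / (K * M + 1)) ≤ v / 2 / (K * M + 1) := min_le_right _ _
    have h0 : 0 ≤ min 1 (v / 2 / (K * M + 1)) := by positivity
    rw [le_div_iff₀ (by positivity)] at h1
    nlinarith
  set lam := t * v / 2 with hlam
  have hl : 0 < lam := by positivity
  refine ⟨lam, hl, ?_⟩
  set b : ℕ → ℝ := fun n => c n * lam ^ n / (Nat.factorial n : ℝ) with hbdef
  have hb : ∀ n, 1 ≤ n → 0 ≤ b n := fun n hn => by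
    have := hcpos n hn
    simp only [hbdef]; positivity
  have hbrec : ∀ n, 2 ≤ n → b n ≤ K * ∑ j ∈ Finset.Icc 2 n, (m j / (Nat.factorial j : ℝ)) *
      ∑ i ∈ (Finset.Nat.antidiagonalTuple j n).filter (fun i => ∀ k, 1 ≤ i k),
        ∏ k, b (i k) := by
    intro n hn
    have h1 := mul_le_mul_of_nonneg_right (hrec n hn)
      (show 0 ≤ lam ^ n / (Nat.factorial n : ℝ) by positivity)
    have h2 : b n = c n * (lam ^ n / (Nat.factorial n : ℝ)) := by simp only [hbdef]; ring
    rw [h2]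
    refine h1.trans (le_of_eq ?_)
    rw [mul_assoc, Finset.sum_mul]
    congr 1
    refine Finset.sum_congr rfl fun j _ => ?_
    rw [mul_assoc, Finset.sum_mul]
    congr 1
    refine Finset.sum_congr rfl fun i hi => ?_
    simp only [Finset.mem_filter, Finset.Nat.mem_antidiagonalTuple] at hi
    simp only [hbdef]
    rw [Finset.prod_div_distrib, Finset.prod_mul_distrib, Finset.prod_pow_eq_pow_sum, hi.1]
    have : (Nat.factorial n : ℝ) ≠ 0 := by positivity
    have : ∏ k, (Nat.factorial (i k) : ℝ) ≠ 0 := by positivity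
    field_simp
  have key : ∀ N : ℕ, ∑ l ∈ Finset.Icc 1 N, b l ≤ t * v := by
    intro N
    induction N with
    | zero => simp; positivity
    | succ N ih =>
      have hsplit : ∑ l ∈ Finset.Icc 1 (N+1), b l = b 1 + ∑ l ∈ Finset.Icc 2 (N+1), b l := by
        rw [← Finset.add_sum_Ioc_eq_sum_Icc (by omega)]
        rfl
      have hb1 : b 1 ≤ lam := by
        simp only [hbdef]; simp; nlinarith
      have hS0 : 0 ≤ ∑ l ∈ Finset.Icc 1 N, b l :=
        Finset.sum_nonneg fun l hl => hb l (Finset.mem_Icc.1 hl).1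
      have hmain : ∑ l ∈ Finset.Icc 2 (N+1), b l ≤ K * (t ^ 2 * M) := by
        calc ∑ l ∈ Finset.Icc 2 (N+1), b l
            ≤ ∑ n ∈ Finset.Icc 2 (N+1), K * ∑ j ∈ Finset.Icc 2 (N+1), (m j / (Nat.factorial j : ℝ)) *
              ∑ i ∈ (Finset.Nat.antidiagonalTuple j n).filter (fun i => ∀ k, 1 ≤ i k),
                ∏ k, b (i k) := by
              refine Finset.sum_le_sum fun n hn => ?_
              rw [Finset.mem_Icc] at hn
              refine (hbrec n hn.1).trans ?_
              refine mul_le_mul_of_nonneg_left ?_ hK.le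
              apply Finset.sum_le_sum_of_subset_of_nonneg
              · exact Finset.Icc_subset_Icc_right hn.2
              · intro j hj _
                have := hm j (Finset.mem_Icc.1 hj).1
                refine mul_nonneg (by positivity) (Finset.sum_nonneg fun i hi => ?_)
                exact Finset.prod_nonneg fun k _ => hb _ ((Finset.mem_filter.1 hi).2 k)
          _ = K * ∑ j ∈ Finset.Icc 2 (N+1), (m j / (Nat.factorial j : ℝ)) *
              ∑ n ∈ Finset.Icc 2 (N+1),
              ∑ i ∈ (Finset.Nat.antidiagonalTuple j n).filter (fun i => ∀ k, 1 ≤ i k),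
                ∏ k, b (i k) := by
              rw [← Finset.mul_sum, Finset.sum_comm]
              simp only [Finset.mul_sum]
          _ ≤ K * ∑ j ∈ Finset.Icc 2 (N+1), t ^ 2 * (m j / (Nat.factorial j : ℝ) * v ^ j) := by
              refine mul_le_mul_of_nonneg_left (Finset.sum_le_sum fun j hj => ?_) hK.le
              have hj2 := (Finset.mem_Icc.1 hj).1
              have hmj := hm j hj2
              have h1 := aux_le b hb N j hj2
              have h2 : (∑ l ∈ Finset.Icc 1 N, b l) ^ j ≤ (t * v) ^ j :=
                pow_le_pow_left₀ hS0 ih j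
              have h3 : (t * v) ^ j ≤ t ^ 2 * v ^ j := by
                rw [mul_pow]
                exact mul_le_mul_of_nonneg_right
                  (pow_le_pow_of_le_one ht0.le ht1 hj2) (by positivity)
              calc _ ≤ (m j / (Nat.factorial j : ℝ)) * (t ^ 2 * v ^ j) :=
                    mul_le_mul_of_nonneg_left (h1.trans (h2.trans h3)) (by positivity)
                _ = _ := by ring
          _ ≤ K * (t ^ 2 * M) := by
              rw [← Finset.mul_sum]
              have := hMN (N+1)
              gcongr
      have : K * (t ^ 2 * M) ≤ t * v / 2 := by nlinarith
      rw [hsplit]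
      linarith
  refine summable_of_sum_range_le (c := t * v) (fun n => hb (n+1) (by omega)) fun N => ?_
  have h := key N
  have h2 : ∑ l ∈ Finset.Icc 1 N, b l = ∑ i ∈ Finset.range N, b (i + 1) := by
    rw [Finset.range_eq_Ico, Finset.sum_Ico_add' b 0 N 1]
    rfl
  rw [h2] at h
  exact h
end

section
/- For every β with 0 < β < 1, every γ > 0, and every λ ≥ 0, the cut-off stable branching mechanism satisfies ψ_β^γ(λ) := ∫₀^∞ r^{-(β+2)} e^{-γr} (e^{-λr} − 1 + λr) dr = c_β [ (γ+λ)^{1+β} − γ^{1+β} − (1+β) γ^β λ ], where c_β = Γ(1−β)/(β(1+β)). -/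
open MeasureTheory Set

lemma phi_bounds (x : ℝ) (hx : 0 ≤ x) :
    0 ≤ Real.exp (-x) - 1 + x ∧ Real.exp (-x) - 1 + x ≤ x ∧ Real.exp (-x) - 1 + x ≤ x ^ 2 := by
  have h1 := Real.add_one_le_exp (-x)
  have h2 : Real.exp (-x) ≤ 1 := Real.exp_le_one_iff.2 (by linarith)
  have h3 := Real.add_one_le_exp x
  have h4 : Real.exp (-x) * Real.exp x = 1 := by rw [← Real.exp_add]; simp
  have h5 := Real.exp_pos (-x)
  refine ⟨by linarith, by linarith, ?_⟩
  have h6 : Real.exp (-x) * (1 + x) ≤ 1 := by nlinarith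
  have h7 : (Real.exp (-x) - (1 - x + x ^ 2)) * (1 + x) ≤ 0 := by
    have : 0 ≤ x ^ 3 := by positivity
    nlinarith
  by_contra h
  push Not at h
  have : 0 < (Real.exp (-x) - (1 - x + x ^ 2)) * (1 + x) := mul_pos (by linarith) (by linarith)
  linarith

lemma int_aux (a r : ℝ) (ha : -1 < a) (hr : 0 < r) :
    IntegrableOn (fun t : ℝ => t ^ a * Real.exp (-r * t)) (Ioi 0) := by
  have := integrableOn_rpow_mul_exp_neg_mul_rpow (p := 1) (s := a) (b := r) ha one_pos hr
  simpa using this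

lemma int_val (a r : ℝ) (ha : -1 < a) (hr : 0 < r) :
    ∫ t in Ioi (0:ℝ), t ^ a * Real.exp (-r * t) = r ^ (-(a + 1)) * Real.Gamma (a + 1) := by
  have := Real.integral_rpow_mul_exp_neg_mul_Ioi (a := a + 1) (by linarith) hr
  simp only [add_sub_cancel_right, ← neg_mul] at this
  rw [this, Real.rpow_neg hr.le, one_div, Real.inv_rpow hr.le]

theorem stmt17 (β : ℝ) (hβ : 0 < β) (hβ1 : β < 1) (γ : ℝ) (hγ : 0 < γ)
    (l : ℝ) (hl : 0 ≤ l) :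
    (∫ r in Set.Ioi (0 : ℝ),
        r ^ (-(β + 2)) * Real.exp (-γ * r) * (Real.exp (-l * r) - 1 + l * r)) =
      (Real.Gamma (1 - β) / (β * (1 + β))) *
        ((γ + l) ^ (1 + β) - γ ^ (1 + β) - (1 + β) * γ ^ β * l) := by
  have hp1 : ∀ r : ℝ, 0 < r → r ^ (-(β + 2)) = r ^ (-β) / r ^ 2 := fun r hr => by
    rw [← Real.rpow_natCast r 2, ← Real.rpow_sub hr]; congr 1; push_cast; ring
  have hp2 : ∀ r : ℝ, 0 < r → r ^ (-(β + 1)) = r ^ (-β) / r := fun r hr => by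
    rw [← Real.rpow_sub_one hr.ne']; congr 1; ring
  have hp3 : ∀ r : ℝ, 0 < r → r ^ (1 - β) = r ^ (-β) * r := fun r hr => by
    rw [← Real.rpow_add_one hr.ne']; congr 1; ring
  have hph : ∀ r : ℝ, 0 < r → 0 ≤ Real.exp (-l * r) - 1 + l * r ∧
      Real.exp (-l * r) - 1 + l * r ≤ l * r ∧ Real.exp (-l * r) - 1 + l * r ≤ (l * r) ^ 2 :=
    fun r hr => by
      have := phi_bounds (l * r) (by positivity)
      simpa only [neg_mul] using this
  set f : ℝ → ℝ := fun r => r ^ (-(β + 2)) * Real.exp (-γ * r) *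
    (Real.exp (-l * r) - 1 + l * r) with hf
  have hfint : IntegrableOn f (Ioi 0) := by
    refine Integrable.mono' ((int_aux (-β) γ (by linarith) hγ).const_mul (l ^ 2)) ?_ ?_
    · exact (by fun_prop : Measurable f).aestronglyMeasurable
    · refine (ae_restrict_iff' measurableSet_Ioi).2 (Filter.Eventually.of_forall fun r hr => ?_)
      have hr : 0 < r := hr
      obtain ⟨h1, -, h3⟩ := hph r hr
      have hE := Real.exp_pos (-γ * r)
      have hR := Real.rpow_pos_of_pos hr (-β)
      simp only [hf]
      rw [Real.norm_of_nonneg (by positivity), hp1 r hr]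
      calc _ ≤ r ^ (-β) / r ^ 2 * Real.exp (-γ * r) * (l * r) ^ 2 := by gcongr
        _ = _ := by field_simp
  set H : ℝ → ℝ := fun r => -(1 / (β + 1)) * (r ^ (-(β + 1)) * Real.exp (-γ * r) *
      (Real.exp (-l * r) - 1 + l * r)) - 1 / (β * (β + 1)) * (r ^ (-β) * Real.exp (-γ * r) *
      (l ^ 2 * r - (γ + l) * (Real.exp (-l * r) - 1 + l * r))) with hH
  set k : ℝ → ℝ := fun r => (γ + l) ^ 2 * (r ^ (-β) * Real.exp (-(γ + l) * r))
      - (γ ^ 2 + 2 * l * γ) * (r ^ (-β) * Real.exp (-γ * r))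
      + l * γ ^ 2 * (r ^ (1 - β) * Real.exp (-γ * r)) with hk
  have i1 := (int_aux (-β) (γ + l) (by linarith) (by linarith)).const_mul ((γ + l) ^ 2)
  have i2 := (int_aux (-β) γ (by linarith) hγ).const_mul (γ ^ 2 + 2 * l * γ)
  have i3 := (int_aux (1 - β) γ (by linarith) hγ).const_mul (l * γ ^ 2)
  have hkint : IntegrableOn k (Ioi 0) := (i1.sub i2).add i3
  have hkval : ∫ r in Ioi (0:ℝ), k r = Real.Gamma (1 - β) *
      ((γ + l) ^ (1 + β) - γ ^ (1 + β) - (1 + β) * γ ^ β * l) := by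
    have e1 : ∫ r in Ioi (0:ℝ), k r = _ := integral_add (i1.sub i2) i3
    have e2 := integral_sub i1 i2
    rw [e1, e2, integral_const_mul, integral_const_mul, integral_const_mul,
      int_val _ _ (by linarith) (by linarith), int_val _ _ (by linarith) (by linarith),
      int_val _ _ (by linarith) (by linarith), Real.Gamma_add_one (s := 1 - β) (by linarith)]
    have hs : 0 < γ + l := by linarith
    have q : ∀ x : ℝ, 0 < x → x ^ (-(-β + 1)) = x ^ β / x := fun x hx => by
      rw [← Real.rpow_sub_one hx.ne']; congr 1; ring
    have q2 : γ ^ (-(1 - β + 1)) = γ ^ β / γ ^ 2 := by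
      rw [← Real.rpow_natCast γ 2, ← Real.rpow_sub hγ]; congr 1; push_cast; ring
    rw [q _ hs, q _ hγ, q2, Real.rpow_one_add' hs.le (by linarith),
      Real.rpow_one_add' hγ.le (by linarith), show -β + 1 = 1 - β by ring]
    field_simp
    ring
  have hderiv : ∀ r ∈ Ioi (0:ℝ), HasDerivAt H (f r - 1 / (β * (β + 1)) * k r) r := by
    intro r hr
    have hr : 0 < r := hr
    have dE : ∀ c : ℝ, HasDerivAt (fun t : ℝ => Real.exp (-c * t)) (Real.exp (-c * r) * (-c)) r :=
      fun c => by simpa using ((hasDerivAt_id r).const_mul (-c)).exp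
    have dphi : HasDerivAt (fun t : ℝ => Real.exp (-l * t) - 1 + l * t)
        (Real.exp (-l * r) * (-l) + l) r := by
      have dl : HasDerivAt (fun t : ℝ => l * t) l r := by
        simpa using (hasDerivAt_id r).const_mul l
      exact ((dE l).sub_const 1).add dl
    have d1 := Real.hasDerivAt_rpow_const (x := r) (p := -(β + 1)) (Or.inl hr.ne')
    have d2 := Real.hasDerivAt_rpow_const (x := r) (p := -β) (Or.inl hr.ne')
    have dl : HasDerivAt (fun t : ℝ => l ^ 2 * t) (l ^ 2) r := by
      simpa using (hasDerivAt_id r).const_mul (l ^ 2)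
    have D := (((d1.mul (dE γ)).mul dphi).const_mul (-(1 / (β + 1)))).sub
      (((d2.mul (dE γ)).mul (dl.sub (dphi.const_mul (γ + l)))).const_mul (1 / (β * (β + 1))))
    refine D.congr_deriv ?_
    simp only [hf, hk, Pi.mul_apply, Pi.sub_apply]
    have x1 : r ^ (-(β + 1) - 1) = r ^ (-β) / r ^ 2 := by rw [← hp1 r hr]; congr 1; ring
    have x2 : r ^ (-β - 1) = r ^ (-β) / r := Real.rpow_sub_one hr.ne' _
    have x3 : Real.exp (-(γ + l) * r) = Real.exp (-γ * r) * Real.exp (-l * r) := by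
      rw [← Real.exp_add]; congr 1; ring
    rw [x1, x2, x3, hp1 r hr, hp2 r hr, hp3 r hr]
    generalize Real.exp (-γ * r) = A
    generalize Real.exp (-l * r) = B
    generalize r ^ (-β) = R
    field_simp
    ring
  obtain ⟨C, hC⟩ : ∃ C : ℝ, ∀ r : ℝ, 0 < r → |H r| ≤ C * (r ^ (1 - β) * Real.exp (-γ * r)) := by
    refine ⟨1 / (β + 1) * l ^ 2 + 1 / (β * (β + 1)) * (l ^ 2 + (γ + l) * l), fun r hr => ?_⟩
    obtain ⟨h1, h2, h3⟩ := hph r hr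
    have hE := Real.exp_pos (-γ * r)
    have hR := Real.rpow_pos_of_pos hr (-β)
    simp only [hH]
    rw [hp2 r hr, hp3 r hr]
    have hs : 0 < γ + l := by linarith
    generalize Real.exp (-l * r) - 1 + l * r = P at *
    generalize Real.exp (-γ * r) = A at *
    generalize r ^ (-β) = R at *
    calc _ ≤ |-(1 / (β + 1)) * (R / r * A * P)| + |1 / (β * (β + 1)) * (R * A * (l ^ 2 * r - (γ + l) * P))| := abs_sub _ _
      _ = 1 / (β + 1) * (R / r * A * P) + 1 / (β * (β + 1)) * (R * A * |l ^ 2 * r - (γ + l) * P|) := by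
        rw [abs_mul, abs_neg, abs_of_pos (by positivity : 0 < 1 / (β + 1)),
          abs_of_nonneg (by positivity : 0 ≤ R / r * A * P), abs_mul,
          abs_of_pos (by positivity : 0 < 1 / (β * (β + 1))), abs_mul,
          abs_of_pos (by positivity : 0 < R * A)]
      _ ≤ 1 / (β + 1) * (R / r * A * (l * r) ^ 2) + 1 / (β * (β + 1)) * (R * A * (l ^ 2 * r + (γ + l) * (l * r))) := by
        gcongr
        have : (γ + l) * P ≤ (γ + l) * (l * r) := by gcongr
        have h0 : 0 ≤ (γ + l) * P := by positivity
        have h00 : 0 ≤ l ^ 2 * r := by positivity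
        rw [abs_le]; constructor <;> linarith
      _ = _ := by field_simp
  have hH0 : H 0 = 0 := by simp [hH]
  have hcont : ContinuousWithinAt H (Ici 0) 0 := by
    rw [← continuousWithinAt_Ioi_iff_Ici]
    have hc : Continuous fun r : ℝ => C * (r ^ (1 - β) * Real.exp (-γ * r)) := by
      have : Continuous fun r : ℝ => r ^ (1 - β) := Real.continuous_rpow_const (by linarith)
      fun_prop
    have ht := (hc.tendsto 0).mono_left (nhdsWithin_le_nhds (s := Ioi 0))
    simp only [Real.zero_rpow (by linarith : 1 - β ≠ 0), zero_mul, mul_zero] at ht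
    unfold ContinuousWithinAt
    rw [hH0]
    refine squeeze_zero_norm' ?_ ht
    filter_upwards [self_mem_nhdsWithin] with r hr using hC r hr
  have hinf : Filter.Tendsto H Filter.atTop (nhds 0) := by
    have ht := (tendsto_rpow_mul_exp_neg_mul_atTop_nhds_zero (1 - β) γ hγ).const_mul C
    rw [mul_zero] at ht
    refine squeeze_zero_norm' ?_ ht
    filter_upwards [Filter.eventually_gt_atTop 0] with r hr using hC r hr
  have key := integral_Ioi_of_hasDerivAt_of_tendsto hcont hderiv
    (hfint.sub (hkint.const_mul _)) hinf
  rw [integral_sub hfint (hkint.const_mul _), integral_const_mul, hkval, hH0] at key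
  have : ∫ r in Ioi (0:ℝ), f r = 1 / (β * (β + 1)) * (Real.Gamma (1 - β) *
      ((γ + l) ^ (1 + β) - γ ^ (1 + β) - (1 + β) * γ ^ β * l)) := by linarith
  rw [this, add_comm β 1]
  ring
end
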